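/- Let f(z) = Σ_{α∈A} a_α z^α be a Laurent polynomial in n variables with finite nonempty support A ⊆ ℤⁿ and nonzero complex coefficients a_α, and let co𝒜_f ⊆ ℝⁿ be the lifted coamoeba of V_f. Then for every connected component C of ℝⁿ \ co𝒜_f, the interior of C is a convex subset of ℝⁿ. (Theorem 5.19(a).) -/

import Mathlib

open Complex

/-!
Let `S` be a connected subset of the complement of the lifted coamoeba, let `x` and `x + d` lie in
`S`, and suppose that the direction `d` takes distinct values on distinct exponents. For a fixed
vector `u` of log-moduli put `F p z = f (exp (u + i p + z d))`. For `p ∈ S` the function `F p` has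
no zeros on the real axis, and for real `z = ± R` with `R` large a single monomial dominates, so
there `f` has a logarithm `L± p` which is continuous in *all* arguments `p`. Hence

  `K p = (∫ z in -R..R, logDeriv (F p) z) - L₊ p + L₋ p`

is continuous on `S` with `exp (K p) = 1`, so it is constant there. Now `F (x + d) z = F x (z + i)`,
and `K x = K (x + d)` says that the logarithmic derivative of `F x` integrates to zero over the
boundary of `[-R, R] × [0, 1]`. By the argument principle `F x` has no zeros in that rectangle;
as `u` is arbitrary, the segment from `x` to `x + d` avoids the coamoeba. Such directions are dense,
which suffices for the convexity of the interior.
-/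

/-! ### The argument principle on rectangles -/

section RectBoundaryIntegral

/-- The integral of `f` along the counterclockwise boundary of the rectangle `[a, b] × [c, d]`,
written with the same parametrisations as the Cauchy–Goursat theorem
`Complex.integral_boundary_rect_eq_zero_of_differentiableOn`. -/
noncomputable def rectBoundaryIntegral (a b c d : ℝ) (f : ℂ → ℂ) : ℂ :=
  (∫ x : ℝ in a..b, f (x + c * I)) - (∫ x : ℝ in a..b, f (x + d * I)) +
    I • (∫ y : ℝ in c..d, f (b + y * I)) - I • (∫ y : ℝ in c..d, f (a + y * I))

variable {a b c d : ℝ} {f g : ℂ → ℂ} {w : ℂ}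

theorem mem_frontier_Icc_reProdIm_Icc (hab : a ≤ b) (hcd : c ≤ d) {z : ℂ} :
    z ∈ frontier (Set.Icc a b ×ℂ Set.Icc c d) ↔
      z.re ∈ Set.Icc a b ∧ (z.im = c ∨ z.im = d) ∨
        (z.re = a ∨ z.re = b) ∧ z.im ∈ Set.Icc c d := by
  simp [frontier_reProdIm, frontier_Icc hab, frontier_Icc hcd, mem_reProdIm]

theorem frontier_Icc_reProdIm_Icc_subset :
    frontier (Set.Icc a b ×ℂ Set.Icc c d) ⊆ Set.Icc a b ×ℂ Set.Icc c d :=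
  (isClosed_Icc.reProdIm isClosed_Icc).frontier_subset

theorem horizontal_mem_frontier (hab : a ≤ b) (hcd : c ≤ d) {y : ℝ} (hy : y = c ∨ y = d) {x : ℝ}
    (hx : x ∈ Set.uIcc a b) : (x + y * I : ℂ) ∈ frontier (Set.Icc a b ×ℂ Set.Icc c d) := by
  rw [Set.uIcc_of_le hab] at hx
  exact (mem_frontier_Icc_reProdIm_Icc hab hcd).2 (.inl (by simpa using ⟨hx, hy⟩))

theorem vertical_mem_frontier (hab : a ≤ b) (hcd : c ≤ d) {x : ℝ} (hx : x = a ∨ x = b) {y : ℝ}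
    (hy : y ∈ Set.uIcc c d) : (x + y * I : ℂ) ∈ frontier (Set.Icc a b ×ℂ Set.Icc c d) := by
  rw [Set.uIcc_of_le hcd] at hy
  exact (mem_frontier_Icc_reProdIm_Icc hab hcd).2 (.inr (by simpa using ⟨hx, hy⟩))

theorem intervalIntegrable_horizontal (hab : a ≤ b) (hcd : c ≤ d)
    (hf : ContinuousOn f (frontier (Set.Icc a b ×ℂ Set.Icc c d))) {y : ℝ} (hy : y = c ∨ y = d) :
    IntervalIntegrable (fun x : ℝ => f (x + y * I)) MeasureTheory.volume a b :=
  (hf.comp (by fun_prop) fun _ => horizontal_mem_frontier hab hcd hy).intervalIntegrable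

theorem intervalIntegrable_vertical (hab : a ≤ b) (hcd : c ≤ d)
    (hf : ContinuousOn f (frontier (Set.Icc a b ×ℂ Set.Icc c d))) {x : ℝ} (hx : x = a ∨ x = b) :
    IntervalIntegrable (fun y : ℝ => f (x + y * I)) MeasureTheory.volume c d :=
  (hf.comp (by fun_prop) fun _ => vertical_mem_frontier hab hcd hx).intervalIntegrable

theorem rectBoundaryIntegral_congr (hab : a ≤ b) (hcd : c ≤ d)
    (h : Set.EqOn f g (frontier (Set.Icc a b ×ℂ Set.Icc c d))) :
    rectBoundaryIntegral a b c d f = rectBoundaryIntegral a b c d g := by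
  have horizontal {y : ℝ} (hy : y = c ∨ y = d) :=
    intervalIntegral.integral_congr (μ := MeasureTheory.volume)
      fun x hx => h (horizontal_mem_frontier hab hcd hy hx)
  have vertical {x : ℝ} (hx : x = a ∨ x = b) :=
    intervalIntegral.integral_congr (μ := MeasureTheory.volume)
      fun y hy => h (vertical_mem_frontier hab hcd hx hy)
  simp only [rectBoundaryIntegral, horizontal (.inl rfl), horizontal (.inr rfl),
    vertical (.inl rfl), vertical (.inr rfl)]

theorem rectBoundaryIntegral_add (hab : a ≤ b) (hcd : c ≤ d)
    (hf : ContinuousOn f (frontier (Set.Icc a b ×ℂ Set.Icc c d)))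
    (hg : ContinuousOn g (frontier (Set.Icc a b ×ℂ Set.Icc c d))) :
    rectBoundaryIntegral a b c d (fun z => f z + g z) =
      rectBoundaryIntegral a b c d f + rectBoundaryIntegral a b c d g := by
  have horizontal {y : ℝ} (hy : y = c ∨ y = d) := intervalIntegral.integral_add
    (intervalIntegrable_horizontal hab hcd hf hy)
    (intervalIntegrable_horizontal hab hcd hg hy)
  have vertical {x : ℝ} (hx : x = a ∨ x = b) := intervalIntegral.integral_add
    (intervalIntegrable_vertical hab hcd hf hx)
    (intervalIntegrable_vertical hab hcd hg hx)
  simp only [rectBoundaryIntegral, horizontal (.inl rfl), horizontal (.inr rfl),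
    vertical (.inl rfl), vertical (.inr rfl), smul_eq_mul]
  ring

theorem rectBoundaryIntegral_const_mul (r : ℂ) :
    rectBoundaryIntegral a b c d (fun z => r * f z) = r * rectBoundaryIntegral a b c d f := by
  simp only [rectBoundaryIntegral, intervalIntegral.integral_const_mul, smul_eq_mul]
  ring

theorem integral_inv_im_pos {ζ : ℝ → ℂ} (hζ : Continuous ζ) (hneg : ∀ t, (ζ t).im < 0)
    (hab : a < b) : 0 < (∫ t in a..b, (ζ t)⁻¹).im := by
  have hne (t : ℝ) : ζ t ≠ 0 := fun h => by simpa [h] using hneg t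
  have hcont : Continuous fun t => (ζ t)⁻¹ := hζ.inv₀ hne
  rw [← imCLM_apply, ← imCLM.intervalIntegral_comp_comm (hcont.intervalIntegrable a b)]
  refine intervalIntegral.intervalIntegral_pos_of_pos
    ((imCLM.continuous.comp hcont).intervalIntegrable a b) (fun t => ?_) hab
  rw [imCLM_apply, inv_im]
  exact div_pos (neg_pos.2 (hneg t)) (normSq_pos.2 (hne t))

theorem rectBoundaryIntegral_inv_sub_im_pos (hw : w ∈ interior (Set.Icc a b ×ℂ Set.Icc c d)) :
    0 < (rectBoundaryIntegral a b c d fun z => (z - w)⁻¹).im := by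
  rw [interior_reProdIm, interior_Icc, interior_Icc, mem_reProdIm] at hw
  obtain ⟨⟨ha, hb⟩, hc, hd⟩ := hw
  -- Rotating each edge to run rightwards below `w` makes its contribution manifestly positive.
  have hrotate : (rectBoundaryIntegral a b c d fun z => (z - w)⁻¹) =
      (∫ x : ℝ in a..b, (x + c * I - w)⁻¹) + (∫ x : ℝ in a..b, (-(x + d * I - w))⁻¹) +
        (∫ y : ℝ in c..d, ((b + y * I - w) * -I)⁻¹) +
        ∫ y : ℝ in c..d, ((a + y * I - w) * I)⁻¹ := by
    simp only [rectBoundaryIntegral, inv_neg, mul_inv, inv_I, intervalIntegral.integral_neg,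
      intervalIntegral.integral_mul_const, smul_eq_mul]
    ring
  have hbottom : 0 < (∫ x : ℝ in a..b, (x + c * I - w)⁻¹).im :=
    integral_inv_im_pos (by fun_prop) (fun x => by simpa using hc) (ha.trans hb)
  have htop : 0 < (∫ x : ℝ in a..b, (-(x + d * I - w))⁻¹).im :=
    integral_inv_im_pos (by fun_prop) (fun x => by simpa using hd) (ha.trans hb)
  have hright : 0 < (∫ y : ℝ in c..d, ((b + y * I - w) * -I)⁻¹).im :=
    integral_inv_im_pos (by fun_prop) (fun y => by simpa using hb) (hc.trans hd)
  have hleft : 0 < (∫ y : ℝ in c..d, ((a + y * I - w) * I)⁻¹).im :=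
    integral_inv_im_pos (by fun_prop) (fun y => by simpa using ha) (hc.trans hd)
  simp only [hrotate, add_im]
  positivity

end RectBoundaryIntegral

section ArgumentPrinciple

theorem exists_eq_pow_smul_of_not_eventually_zero {𝕜 E : Type*} [NontriviallyNormedField 𝕜]
    [NormedAddCommGroup E] [NormedSpace 𝕜 E] {g : 𝕜 → E} {s : Set 𝕜} {w : 𝕜}
    (hg : AnalyticOnNhd 𝕜 g s) (hw : w ∈ s) (hne : ¬∀ᶠ z in nhds w, g z = 0) :
    ∃ (n : ℕ) (h : 𝕜 → E), AnalyticOnNhd 𝕜 h s ∧ h w ≠ 0 ∧ ∀ z, g z = (z - w) ^ n • h z := by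
  classical
  obtain ⟨n, h₀, hh₀, hh₀w, heq⟩ := (hg w hw).exists_eventuallyEq_pow_smul_nonzero_iff.2 hne
  set h : 𝕜 → E := Function.update (fun z => ((z - w) ^ n)⁻¹ • g z) w (h₀ w)
  have hh (z : 𝕜) (hz : z ≠ w) : h z = ((z - w) ^ n)⁻¹ • g z := Function.update_of_ne hz _ _
  have hhw : h w = h₀ w := Function.update_self _ _ _
  refine ⟨n, h, fun z hz => ?_, hhw ▸ hh₀w, fun z => ?_⟩
  · rcases eq_or_ne z w with rfl | hzw
    · refine hh₀.congr (heq.mono fun y hy => ?_)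
      rcases eq_or_ne y z with rfl | hyz
      · exact hhw.symm
      · rw [hh y hyz, hy, inv_smul_smul₀ (pow_ne_zero n (sub_ne_zero.2 hyz))]
    · refine AnalyticAt.congr (f := fun y => ((y - w) ^ n)⁻¹ • g y) ?_
        ((eventually_ne_nhds hzw).mono fun y hy => (hh y hy).symm)
      exact (((analyticAt_id.sub analyticAt_const).pow n).inv
        (pow_ne_zero n (sub_ne_zero.2 hzw))).smul (hg z hz)
  · rcases eq_or_ne z w with rfl | hzw
    · rw [hhw]; exact heq.self_of_nhds
    · rw [hh z hzw, smul_inv_smul₀ (pow_ne_zero n (sub_ne_zero.2 hzw))]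

variable {a b c d : ℝ} {g : ℂ → ℂ} {w : ℂ}

theorem analyticOnNhd_logDeriv {s : Set ℂ} (hg : AnalyticOnNhd ℂ g s) (hne : ∀ z ∈ s, g z ≠ 0) :
    AnalyticOnNhd ℂ (logDeriv g) s :=
  hg.deriv.div hg hne

theorem lt_and_lt_of_mem_interior_reProdIm (hw : w ∈ interior (Set.Icc a b ×ℂ Set.Icc c d)) :
    a < b ∧ c < d := by
  rw [interior_reProdIm, interior_Icc, interior_Icc, mem_reProdIm] at hw
  exact ⟨hw.1.1.trans hw.1.2, hw.2.1.trans hw.2.2⟩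

theorem logDeriv_pow_sub_mul {h : ℂ → ℂ} {n : ℕ} {z : ℂ} (hz : z ≠ w) (hhz : h z ≠ 0)
    (hh : DifferentiableAt ℂ h z) :
    logDeriv (fun z => (z - w) ^ n * h z) z = n * (z - w)⁻¹ + logDeriv h z := by
  have hpow : logDeriv (fun z => (z - w) ^ n) z = n * (z - w)⁻¹ := by
    rw [logDeriv_fun_pow (by fun_prop), logDeriv_apply, deriv_sub_const_fun, deriv_id'', one_div]
  rw [← hpow]
  exact logDeriv_mul z (pow_ne_zero n (sub_ne_zero.2 hz)) hhz (by fun_prop) hh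

theorem rectBoundaryIntegral_logDeriv_pow_sub_mul {h : ℂ → ℂ} {n : ℕ}
    (hw : w ∈ interior (Set.Icc a b ×ℂ Set.Icc c d))
    (hh : AnalyticOnNhd ℂ h (Set.Icc a b ×ℂ Set.Icc c d))
    (hne : ∀ z ∈ frontier (Set.Icc a b ×ℂ Set.Icc c d), h z ≠ 0) :
    rectBoundaryIntegral a b c d (logDeriv fun z => (z - w) ^ n * h z) =
      n • rectBoundaryIntegral a b c d (fun z => (z - w)⁻¹) +
        rectBoundaryIntegral a b c d (logDeriv h) := by
  obtain ⟨hab, hcd⟩ := lt_and_lt_of_mem_interior_reProdIm hw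
  have hzw (z : ℂ) (hz : z ∈ frontier (Set.Icc a b ×ℂ Set.Icc c d)) : z ≠ w := by
    rintro rfl
    exact hz.2 hw
  have hsub : AnalyticOnNhd ℂ h (frontier (Set.Icc a b ×ℂ Set.Icc c d)) :=
    hh.mono frontier_Icc_reProdIm_Icc_subset
  have hinv : ContinuousOn (fun z => (n : ℂ) * (z - w)⁻¹)
      (frontier (Set.Icc a b ×ℂ Set.Icc c d)) :=
    continuousOn_const.mul ((by fun_prop : Continuous fun z => z - w).continuousOn.inv₀
      fun z hz => sub_ne_zero.2 (hzw z hz))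
  rw [nsmul_eq_mul, ← rectBoundaryIntegral_const_mul,
    ← rectBoundaryIntegral_add hab.le hcd.le hinv (analyticOnNhd_logDeriv hsub hne).continuousOn]
  exact rectBoundaryIntegral_congr hab.le hcd.le fun z hz =>
    logDeriv_pow_sub_mul (hzw z hz) (hne z hz) (hsub z hz).differentiableAt

theorem rectBoundaryIntegral_eq_zero_of_differentiableOn (hab : a ≤ b) (hcd : c ≤ d)
    (hg : DifferentiableOn ℂ g (Set.Icc a b ×ℂ Set.Icc c d)) :
    rectBoundaryIntegral a b c d g = 0 :=
  integral_boundary_rect_eq_zero_of_differentiableOn g ⟨a, c⟩ ⟨b, d⟩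
    (by simpa only [Set.uIcc_of_le hab, Set.uIcc_of_le hcd] using hg)

theorem corner_mem_frontier (hab : a ≤ b) (hcd : c ≤ d) :
    (a + c * I : ℂ) ∈ frontier (Set.Icc a b ×ℂ Set.Icc c d) :=
  horizontal_mem_frontier hab hcd (.inl rfl) Set.left_mem_uIcc

theorem isPreconnected_Icc_reProdIm_Icc : IsPreconnected (Set.Icc a b ×ℂ Set.Icc c d) :=
  (((convex_Icc a b).linear_preimage reLm).inter
    ((convex_Icc c d).linear_preimage imLm)).isPreconnected

theorem exists_eq_pow_sub_mul_of_mem_interior (hg : AnalyticOnNhd ℂ g (Set.Icc a b ×ℂ Set.Icc c d))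
    (hne : ∀ z ∈ frontier (Set.Icc a b ×ℂ Set.Icc c d), g z ≠ 0)
    (hw : w ∈ interior (Set.Icc a b ×ℂ Set.Icc c d)) :
    ∃ (n : ℕ) (h : ℂ → ℂ), AnalyticOnNhd ℂ h (Set.Icc a b ×ℂ Set.Icc c d) ∧ h w ≠ 0 ∧
      g = fun z => (z - w) ^ n * h z := by
  obtain ⟨hab, hcd⟩ := lt_and_lt_of_mem_interior_reProdIm hw
  have hcorner := corner_mem_frontier hab.le hcd.le
  have hnotzero : ¬∀ᶠ z in nhds w, g z = 0 := fun hzero =>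
    hne _ hcorner (hg.eqOn_zero_of_preconnected_of_eventuallyEq_zero
      isPreconnected_Icc_reProdIm_Icc (interior_subset hw) hzero
      (frontier_Icc_reProdIm_Icc_subset hcorner))
  obtain ⟨n, h, hh, hhw, heq⟩ :=
    exists_eq_pow_smul_of_not_eventually_zero hg (interior_subset hw) hnotzero
  exact ⟨n, h, hh, hhw, funext heq⟩

theorem rectBoundaryIntegral_logDeriv_im_nonneg_of_zeros_subset (hab : a ≤ b) (hcd : c ≤ d)
    (T : Finset ℂ) (hg : AnalyticOnNhd ℂ g (Set.Icc a b ×ℂ Set.Icc c d))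
    (hne : ∀ z ∈ frontier (Set.Icc a b ×ℂ Set.Icc c d), g z ≠ 0)
    (hT : ∀ z ∈ interior (Set.Icc a b ×ℂ Set.Icc c d), g z = 0 → z ∈ T) :
    0 ≤ (rectBoundaryIntegral a b c d (logDeriv g)).im := by
  classical
  induction T using Finset.induction_on generalizing g with
  | empty =>
    have hnz (z : ℂ) (hz : z ∈ Set.Icc a b ×ℂ Set.Icc c d) : g z ≠ 0 := by
      by_cases hint : z ∈ interior (Set.Icc a b ×ℂ Set.Icc c d)
      · exact fun h0 => Finset.notMem_empty z (hT z hint h0)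
      · exact hne z ⟨subset_closure hz, hint⟩
    rw [rectBoundaryIntegral_eq_zero_of_differentiableOn hab hcd
      (analyticOnNhd_logDeriv hg hnz).differentiableOn, zero_im]
  | insert w T _ ih =>
    by_cases hw : w ∈ interior (Set.Icc a b ×ℂ Set.Icc c d)
    · obtain ⟨n, h, hh, hhw, rfl⟩ := exists_eq_pow_sub_mul_of_mem_interior hg hne hw
      have hhne (z : ℂ) (hz : z ∈ frontier (Set.Icc a b ×ℂ Set.Icc c d)) : h z ≠ 0 :=
        right_ne_zero_of_mul (hne z hz)
      have hhT (z : ℂ) (hz : z ∈ interior (Set.Icc a b ×ℂ Set.Icc c d)) (h0 : h z = 0) : z ∈ T :=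
        Finset.mem_of_mem_insert_of_ne (hT z hz (by simp [h0])) (by rintro rfl; exact hhw h0)
      have hinv := (rectBoundaryIntegral_inv_sub_im_pos hw).le
      rw [rectBoundaryIntegral_logDeriv_pow_sub_mul hw hh hhne, add_im, im_nsmul]
      exact add_nonneg (nsmul_nonneg hinv n) (ih hh hhne hhT)
    · exact ih hg hne fun z hz h0 =>
        Finset.mem_of_mem_insert_of_ne (hT z hz h0) (by rintro rfl; exact hw hz)

theorem finite_zeros_inter_of_isCompact {K : Set ℂ} {u : ℂ} (hK : IsCompact K)
    (hconn : IsPreconnected K) (hg : AnalyticOnNhd ℂ g K) (hu : u ∈ K) (hgu : g u ≠ 0) :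
    {z ∈ K | g z = 0}.Finite := by
  refine (hK.finite_sdiff_of_mem_codiscreteWithin
    (hg.preimage_zero_mem_codiscreteWithin hgu hu ⟨⟨u, hu⟩, hconn⟩)).subset ?_
  rintro z ⟨hz, h0⟩
  exact ⟨hz, fun h => h h0⟩

theorem rectBoundaryIntegral_logDeriv_im_nonneg (hab : a ≤ b) (hcd : c ≤ d)
    (hg : AnalyticOnNhd ℂ g (Set.Icc a b ×ℂ Set.Icc c d))
    (hne : ∀ z ∈ frontier (Set.Icc a b ×ℂ Set.Icc c d), g z ≠ 0) :
    0 ≤ (rectBoundaryIntegral a b c d (logDeriv g)).im := by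
  have hcorner := corner_mem_frontier hab hcd
  have hfinite : {z ∈ Set.Icc a b ×ℂ Set.Icc c d | g z = 0}.Finite :=
    finite_zeros_inter_of_isCompact (isCompact_Icc.reProdIm isCompact_Icc)
      isPreconnected_Icc_reProdIm_Icc hg (frontier_Icc_reProdIm_Icc_subset hcorner)
      (hne _ hcorner)
  exact rectBoundaryIntegral_logDeriv_im_nonneg_of_zeros_subset hab hcd hfinite.toFinset hg hne
    fun z hz h0 => hfinite.mem_toFinset.2 ⟨interior_subset hz, h0⟩

theorem rectBoundaryIntegral_logDeriv_im_pos
    (hg : AnalyticOnNhd ℂ g (Set.Icc a b ×ℂ Set.Icc c d))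
    (hne : ∀ z ∈ frontier (Set.Icc a b ×ℂ Set.Icc c d), g z ≠ 0)
    (hw : w ∈ interior (Set.Icc a b ×ℂ Set.Icc c d)) (hgw : g w = 0) :
    0 < (rectBoundaryIntegral a b c d (logDeriv g)).im := by
  obtain ⟨hab, hcd⟩ := lt_and_lt_of_mem_interior_reProdIm hw
  obtain ⟨n, h, hh, hhw, rfl⟩ := exists_eq_pow_sub_mul_of_mem_interior hg hne hw
  have hn : n ≠ 0 := by
    rintro rfl
    exact hhw (by simpa using hgw)
  have hhne (z : ℂ) (hz : z ∈ frontier (Set.Icc a b ×ℂ Set.Icc c d)) : h z ≠ 0 :=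
    right_ne_zero_of_mul (hne z hz)
  rw [rectBoundaryIntegral_logDeriv_pow_sub_mul hw hh hhne, add_im, im_nsmul]
  exact add_pos_of_pos_of_nonneg
    (nsmul_pos (rectBoundaryIntegral_inv_sub_im_pos hw) hn)
    (rectBoundaryIntegral_logDeriv_im_nonneg hab.le hcd.le hh hhne)

theorem ne_zero_of_rectBoundaryIntegral_logDeriv_eq_zero
    (hg : AnalyticOnNhd ℂ g (Set.Icc a b ×ℂ Set.Icc c d))
    (hne : ∀ z ∈ frontier (Set.Icc a b ×ℂ Set.Icc c d), g z ≠ 0)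
    (h : rectBoundaryIntegral a b c d (logDeriv g) = 0) {z : ℂ}
    (hz : z ∈ Set.Icc a b ×ℂ Set.Icc c d) : g z ≠ 0 := by
  by_cases hint : z ∈ interior (Set.Icc a b ×ℂ Set.Icc c d)
  · intro h0
    simpa [h] using rectBoundaryIntegral_logDeriv_im_pos hg hne hint h0
  · exact hne z ⟨subset_closure hz, hint⟩

end ArgumentPrinciple

/-! ### Integrals of logarithmic derivatives along lines -/

section LogDerivAlongCurve

theorem exp_integral_logDeriv {γ : ℝ → ℂ} (hγ : ContDiff ℝ 1 γ) (hne : ∀ t, γ t ≠ 0) (a b : ℝ) :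
    cexp (∫ t in a..b, logDeriv γ t) = γ b / γ a := by
  have hcont : Continuous (logDeriv γ) := (hγ.continuous_deriv le_rfl).div hγ.continuous hne
  set q : ℝ → ℂ := fun t => γ t * cexp (-∫ s in a..t, logDeriv γ s) with hq
  have hderiv (t : ℝ) : HasDerivAt q 0 t := by
    have hint : HasDerivAt (fun t => ∫ s in a..t, logDeriv γ s) (logDeriv γ t) t :=
      hcont.integral_hasStrictDerivAt a t |>.hasDerivAt
    have hγt : HasDerivAt γ (deriv γ t) t := (hγ.differentiable one_ne_zero t).hasDerivAt
    refine (hγt.mul hint.neg.cexp).congr_deriv ?_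
    simp only [Pi.neg_apply, logDeriv_apply]
    field_simp [hne t]
    ring
  have hqab : q b = q a :=
    is_const_of_deriv_eq_zero (fun t => (hderiv t).differentiableAt) (fun t => (hderiv t).deriv) b a
  have hγa : γ a = γ b * cexp (-∫ s in a..b, logDeriv γ s) := by simpa [hq] using hqab.symm
  rw [hγa, exp_neg, div_mul_cancel_left₀ (hne b), inv_inv]

theorem eq_of_exp_comp_eq_const {X : Type*} [TopologicalSpace X] {S : Set X}
    (hS : IsPreconnected S) {K : X → ℂ} (hK : ContinuousOn K S) {w : ℂ}
    (hw : ∀ p ∈ S, cexp (K p) = w) {x y : X} (hx : x ∈ S) (hy : y ∈ S) : K x = K y :=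
  isCoveringMap_exp.constOn_of_comp hS hK
    (fun p hp q hq => Subtype.ext ((hw p hp).trans (hw q hq).symm)) hx hy

theorem integral_logDeriv_eq_sub_of_exp_eq {γ L : ℝ → ℂ} (hγ : ContDiff ℝ 1 γ) (hL : Continuous L)
    (hexp : ∀ t, cexp (L t) = γ t) (a b : ℝ) : ∫ t in a..b, logDeriv γ t = L b - L a := by
  have hne (t : ℝ) : γ t ≠ 0 := hexp t ▸ exp_ne_zero _
  have hcont : Continuous (logDeriv γ) := (hγ.continuous_deriv le_rfl).div hγ.continuous hne
  have hconst (t : ℝ) : cexp ((∫ s in a..t, logDeriv γ s) - L t) = (γ a)⁻¹ := by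
    rw [exp_sub, exp_integral_logDeriv hγ hne, hexp, div_div_cancel_left' (hne t)]
  have hprimitive : Continuous fun t => ∫ s in a..t, logDeriv γ s :=
    intervalIntegral.continuous_primitive hcont.intervalIntegrable a
  have hab : (∫ t in a..b, logDeriv γ t) - L b = (∫ t in a..a, logDeriv γ t) - L a :=
    eq_of_exp_comp_eq_const isPreconnected_univ (hprimitive.sub hL).continuousOn
      (fun t _ => hconst t) (Set.mem_univ b) (Set.mem_univ a)
  rw [intervalIntegral.integral_same] at hab
  linear_combination hab

variable {g : ℂ → ℂ}

theorem contDiff_comp_line (hg : Differentiable ℂ g) (z v : ℂ) :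
    ContDiff ℝ 1 fun t : ℝ => g (z + t * v) :=
  (hg.contDiff.restrict_scalars ℝ).comp
    (contDiff_const.add (ofRealCLM.contDiff.mul contDiff_const))

theorem logDeriv_comp_line (hg : Differentiable ℂ g) (z v : ℂ) (t : ℝ) :
    logDeriv (fun t : ℝ => g (z + t * v)) t = v * logDeriv g (z + t * v) := by
  have hline : HasDerivAt (fun t : ℝ => z + t * v) v t := by
    simpa using ((hasDerivAt_id t).ofReal_comp.mul_const v).const_add z
  have hcomp := (hg (z + t * v)).hasDerivAt.scomp t hline
  rw [logDeriv_apply, logDeriv_apply, mul_div_assoc']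
  exact congrArg (· / g (z + t * v)) hcomp.deriv

theorem exp_integral_logDeriv_ofReal (hg : Differentiable ℂ g) (hne : ∀ t : ℝ, g t ≠ 0) (a b : ℝ) :
    cexp (∫ t : ℝ in a..b, logDeriv g t) = g b / g a := by
  have hline (t : ℝ) : logDeriv (fun t : ℝ => g (0 + t * 1)) t = logDeriv g t := by
    rw [logDeriv_comp_line hg, one_mul, zero_add, mul_one]
  simp_rw [← hline]
  simpa using exp_integral_logDeriv (contDiff_comp_line hg 0 1) (by simpa using hne) a b

theorem I_smul_integral_logDeriv_vertical {L : ℝ → ℂ} {x : ℝ} (hg : Differentiable ℂ g)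
    (hL : Continuous L) (hexp : ∀ y : ℝ, cexp (L y) = g (x + y * I)) (c d : ℝ) :
    I • ∫ y : ℝ in c..d, logDeriv g (x + y * I) = L d - L c := by
  rw [← integral_logDeriv_eq_sub_of_exp_eq (contDiff_comp_line hg x I) hL hexp, smul_eq_mul,
    ← intervalIntegral.integral_const_mul]
  simp_rw [logDeriv_comp_line hg]

theorem continuousOn_integral_logDeriv {X : Type*} [TopologicalSpace X] {S : Set X}
    {F : X → ℂ → ℂ} (hF : Continuous fun q : X × ℝ => F q.1 q.2)
    (hF' : Continuous fun q : X × ℝ => deriv (F q.1) q.2)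
    (hne : ∀ p ∈ S, ∀ t : ℝ, F p t ≠ 0) (a b : ℝ) :
    ContinuousOn (fun p => ∫ t : ℝ in a..b, logDeriv (F p) t) S := by
  rw [continuousOn_iff_continuous_domRestrict]
  refine intervalIntegral.continuous_parametric_intervalIntegral_of_continuous'
    (f := fun (p : S) (t : ℝ) => logDeriv (F p) t) ?_ a b
  have hval : Continuous fun q : S × ℝ => ((q.1 : X), q.2) := by fun_prop
  exact (hF'.comp hval).div (hF.comp hval) fun q => hne q.1 q.1.2 q.2

end LogDerivAlongCurve

/-! ### Exponential sums -/

section ExpSum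

variable {ι E : Type*} [AddCommGroup E] [Module ℝ E] [TopologicalSpace E]

/-- The exponential sum `f(exp(u + i p))` of the generalised Laurent polynomial `f` with support
`A`, coefficients `a` and real exponents `l`, where `u` is the logarithm of the modulus and `p` the
argument of the point at which `f` is evaluated. -/
noncomputable def expSum (A : Finset ι) (a : ι → ℂ) (l : ι → E →L[ℝ] ℝ) (u p : E) : ℂ :=
  ∑ α ∈ A, a α * cexp (l α u + l α p * I)

/-- The lifted coamoeba of an exponential sum: the arguments of its zeros. -/
def expCoamoeba (A : Finset ι) (a : ι → ℂ) (l : ι → E →L[ℝ] ℝ) : Set E :=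
  {p | ∃ u, expSum A a l u p = 0}

/-- The restriction of an exponential sum to the complex line through `u + i p` in the real
direction `d`. -/
noncomputable def expLine (A : Finset ι) (a : ι → ℂ) (l : ι → E →L[ℝ] ℝ) (d u p : E) (z : ℂ) : ℂ :=
  expSum A a l (u + z.re • d) (p + z.im • d)

variable {A : Finset ι} {a : ι → ℂ} {l : ι → E →L[ℝ] ℝ} {d u v p : E}

theorem notMem_expCoamoeba : p ∉ expCoamoeba A a l ↔ ∀ u, expSum A a l u p ≠ 0 :=
  not_exists

theorem continuous_expSum : Continuous (expSum A a l u) := by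
  unfold expSum
  fun_prop

theorem norm_expSum_div_sub_one_le [DecidableEq ι] {α : ι} (hα : α ∈ A) (haα : a α ≠ 0) :
    ‖expSum A a l v p / (a α * cexp (l α v + l α p * I)) - 1‖ ≤
      ∑ β ∈ A.erase α, ‖a β / a α‖ * Real.exp (l β v - l α v) := by
  have hterm : a α * cexp (l α v + l α p * I) ≠ 0 := mul_ne_zero haα (exp_ne_zero _)
  have hsum : expSum A a l v p / (a α * cexp (l α v + l α p * I)) - 1 =
      ∑ β ∈ A.erase α, a β * cexp (l β v + l β p * I) / (a α * cexp (l α v + l α p * I)) := by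
    rw [expSum, ← Finset.add_sum_erase A _ hα, add_div, div_self hterm, add_sub_cancel_left,
      Finset.sum_div]
  rw [hsum]
  refine (norm_sum_le _ _).trans_eq (Finset.sum_congr rfl fun β _ => ?_)
  simp only [norm_div, norm_mul, norm_exp, Real.exp_sub, add_re, ofReal_re, re_ofReal_mul, I_re,
    mul_zero, add_zero]
  exact mul_div_mul_comm _ _ _ _

theorem exists_continuous_log_of_lopsided [DecidableEq ι] {α : ι} (hα : α ∈ A) (haα : a α ≠ 0)
    (hlop : ∑ β ∈ A.erase α, ‖a β / a α‖ * Real.exp (l β v - l α v) < 1) :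
    ∃ L : E → ℂ, Continuous L ∧ ∀ p, cexp (L p) = expSum A a l v p := by
  set q : E → ℂ := fun p => expSum A a l v p / (a α * cexp (l α v + l α p * I))
  have hterm (p : E) : a α * cexp (l α v + l α p * I) ≠ 0 := mul_ne_zero haα (exp_ne_zero _)
  have hslit (p : E) : q p ∈ slitPlane :=
    ball_one_subset_slitPlane
      (mem_ball_iff_norm.2 ((norm_expSum_div_sub_one_le hα haα).trans_lt hlop))
  have hcont : Continuous q := continuous_expSum.div (by fun_prop) hterm
  refine ⟨fun p => log (a α) + (l α v + l α p * I) + log (q p), ?_, fun p => ?_⟩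
  · exact (by fun_prop : Continuous fun p => log (a α) + (l α v + l α p * I)).add
      (hcont.clog hslit)
  · rw [exp_add, exp_add, exp_log haα, exp_log (slitPlane_ne_zero (hslit p))]
    exact mul_div_cancel₀ _ (hterm p)

theorem tendsto_sum_exp_sub_atTop {B : Finset ι} {c : ι → ℝ} {α : ι}
    (hlt : ∀ β ∈ B, c β ≠ 0 → l β d < l α d) :
    Filter.Tendsto
      (fun R : ℝ => ∑ β ∈ B, c β * Real.exp (l β (u + R • d) - l α (u + R • d)))
      Filter.atTop (nhds 0) := by
  rw [← Finset.sum_const_zero (s := B)]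
  refine tendsto_finsetSum _ fun β hβ => ?_
  rcases eq_or_ne (c β) 0 with h0 | h0
  · simp [h0]
  have hexponent (R : ℝ) : l β (u + R • d) - l α (u + R • d) =
      (l β d - l α d) * R + (l β u - l α u) := by
    simp only [map_add, map_smul, smul_eq_mul]
    ring
  simp only [hexponent]
  rw [← mul_zero (c β)]
  exact (Real.tendsto_exp_atBot.comp (Filter.tendsto_atBot_add_const_right _ _
    (Filter.tendsto_id.const_mul_atTop_of_neg (sub_neg.2 (hlt β hβ h0))))).const_mul _

theorem eventually_exists_continuous_log (hA : ∃ α ∈ A, a α ≠ 0)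
    (hd : Set.InjOn (fun α => l α d) A) (u : E) :
    ∀ᶠ R : ℝ in Filter.atTop,
      ∃ L : E → ℂ, Continuous L ∧ ∀ p, cexp (L p) = expSum A a l (u + R • d) p := by
  classical
  obtain ⟨α, hα, hmax⟩ := (A.filter (a · ≠ 0)).exists_max_image (fun α => l α d)
    (Finset.filter_nonempty_iff.2 hA)
  obtain ⟨hαA, haα⟩ := Finset.mem_filter.1 hα
  have hlt : ∀ β ∈ A.erase α, ‖a β / a α‖ ≠ 0 → l β d < l α d := by
    intro β hβ hne
    obtain ⟨hβα, hβA⟩ := Finset.mem_erase.1 hβ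
    have haβ : a β ≠ 0 := fun h => hne (by simp [h])
    exact (hmax β (Finset.mem_filter.2 ⟨hβA, haβ⟩)).lt_of_ne fun h => hβα (hd hβA hαA h)
  filter_upwards [(tendsto_sum_exp_sub_atTop hlt).eventually_lt_const one_pos] with R hR
  exact exists_continuous_log_of_lopsided hαA haα hR

theorem expLine_eq_sum (z : ℂ) :
    expLine A a l d u p z = ∑ α ∈ A, a α * cexp (l α u + l α p * I + l α d * z) := by
  refine Finset.sum_congr rfl fun α _ => ?_
  congr 2
  conv_rhs => rw [← re_add_im z]
  simp only [map_add, map_smul, smul_eq_mul]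
  push_cast
  ring

theorem hasDerivAt_expLine (z : ℂ) :
    HasDerivAt (expLine A a l d u p) (expLine A (fun α => a α * l α d) l d u p z) z := by
  have hsum : expLine A a l d u p =
      fun z => ∑ α ∈ A, a α * cexp (l α u + l α p * I + l α d * z) := funext expLine_eq_sum
  rw [hsum, expLine_eq_sum]
  refine HasDerivAt.fun_sum fun α _ => ?_
  refine ((((hasDerivAt_id z).const_mul _).const_add _).cexp.const_mul (a α)).congr_deriv ?_
  simp only [id_eq]
  ring

theorem differentiable_expLine : Differentiable ℂ (expLine A a l d u p) :=
  fun z => (hasDerivAt_expLine z).differentiableAt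

theorem continuous_expLine :
    Continuous fun q : E × ℝ => expLine A a l d u q.1 q.2 := by
  simp only [expLine_eq_sum]
  fun_prop

theorem continuous_deriv_expLine :
    Continuous fun q : E × ℝ => deriv (expLine A a l d u q.1) q.2 := by
  simp only [(hasDerivAt_expLine _).deriv]
  exact continuous_expLine

theorem expLine_ofReal (t : ℝ) : expLine A a l d u p t = expSum A a l (u + t • d) p := by
  simp [expLine]

theorem expLine_ofReal_add_mul_I (s t : ℝ) :
    expLine A a l d u p (s + t * I) = expSum A a l (u + s • d) (p + t • d) := by
  simp [expLine]

theorem logDeriv_expLine_add_smul (t : ℝ) (z : ℂ) :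
    logDeriv (expLine A a l d u (p + t • d)) z = logDeriv (expLine A a l d u p) (z + t * I) := by
  have hshift : expLine A a l d u (p + t • d) = fun z => expLine A a l d u p (z + t * I) := by
    funext z
    simp [expLine, add_smul, add_assoc, add_comm (t • d)]
  rw [hshift, logDeriv_apply, logDeriv_apply, deriv_comp_add_const]

theorem constOn_integral_logDeriv_expLine_sub_add {S : Set E} (hS : IsPreconnected S)
    (hSsub : S ⊆ (expCoamoeba A a l)ᶜ) {r s : ℝ} {L₁ L₂ : E → ℂ}
    (hL₁ : Continuous L₁) (hexp₁ : ∀ p, cexp (L₁ p) = expSum A a l (u + r • d) p)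
    (hL₂ : Continuous L₂) (hexp₂ : ∀ p, cexp (L₂ p) = expSum A a l (u + s • d) p)
    {x y : E} (hx : x ∈ S) (hy : y ∈ S) :
    (∫ t : ℝ in r..s, logDeriv (expLine A a l d u x) t) - L₂ x + L₁ x =
      (∫ t : ℝ in r..s, logDeriv (expLine A a l d u y) t) - L₂ y + L₁ y := by
  have hne (p : E) (hp : p ∈ S) (t : ℝ) : expLine A a l d u p t ≠ 0 := by
    rw [expLine_ofReal]
    exact notMem_expCoamoeba.1 (hSsub hp) _
  have hcont : ContinuousOn
      (fun p => (∫ t : ℝ in r..s, logDeriv (expLine A a l d u p) t) - L₂ p + L₁ p) S :=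
    ((continuousOn_integral_logDeriv continuous_expLine continuous_deriv_expLine hne r s).sub
      hL₂.continuousOn).add hL₁.continuousOn
  refine eq_of_exp_comp_eq_const hS hcont (w := 1) (fun p hp => ?_) hx hy
  rw [exp_add, exp_sub, exp_integral_logDeriv_ofReal differentiable_expLine (hne p hp), hexp₁,
    hexp₂, expLine_ofReal, expLine_ofReal]
  have hr := notMem_expCoamoeba.1 (hSsub hp) (u + r • d)
  have hs := notMem_expCoamoeba.1 (hSsub hp) (u + s • d)
  field_simp

theorem rectBoundaryIntegral_logDeriv_expLine_eq_zero [ContinuousAdd E] [ContinuousSMul ℝ E]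
    {S : Set E} (hS : IsPreconnected S) (hSsub : S ⊆ (expCoamoeba A a l)ᶜ) {r s : ℝ}
    {L₁ L₂ : E → ℂ}
    (hL₁ : Continuous L₁) (hexp₁ : ∀ p, cexp (L₁ p) = expSum A a l (u + r • d) p)
    (hL₂ : Continuous L₂) (hexp₂ : ∀ p, cexp (L₂ p) = expSum A a l (u + s • d) p)
    {x : E} (hx : x ∈ S) (hy : x + d ∈ S) :
    rectBoundaryIntegral r s 0 1 (logDeriv (expLine A a l d u x)) = 0 := by
  have hvertical {σ : ℝ} {L : E → ℂ} (hL : Continuous L)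
      (hexp : ∀ p, cexp (L p) = expSum A a l (u + σ • d) p) :
      I • ∫ t : ℝ in 0..1, logDeriv (expLine A a l d u x) (σ + t * I) = L (x + d) - L x := by
    have := I_smul_integral_logDeriv_vertical (L := fun t : ℝ => L (x + t • d))
      (g := expLine A a l d u x) differentiable_expLine (hL.comp (by fun_prop))
      (fun t => by rw [hexp, expLine_ofReal_add_mul_I]) 0 1
    simpa only [one_smul, zero_smul, add_zero] using this
  have hhorizontal (t : ℝ) : ∫ σ : ℝ in r..s, logDeriv (expLine A a l d u x) (σ + t * I) =
      ∫ σ : ℝ in r..s, logDeriv (expLine A a l d u (x + t • d)) σ := by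
    simp only [logDeriv_expLine_add_smul]
  have hindex := constOn_integral_logDeriv_expLine_sub_add hS hSsub hL₁ hexp₁ hL₂ hexp₂ hx hy
  rw [rectBoundaryIntegral, hvertical hL₁ hexp₁, hvertical hL₂ hexp₂, hhorizontal, hhorizontal,
    zero_smul, add_zero, one_smul]
  linear_combination hindex

theorem expLine_ne_zero_of_mem_frontier {r s : ℝ} (hrs : r ≤ s) {x : E}
    (hr : ∀ p, expSum A a l (u + r • d) p ≠ 0) (hs : ∀ p, expSum A a l (u + s • d) p ≠ 0)
    (hx : x ∉ expCoamoeba A a l) (hy : x + d ∉ expCoamoeba A a l) {z : ℂ}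
    (hz : z ∈ frontier (Set.Icc r s ×ℂ Set.Icc 0 1)) : expLine A a l d u x z ≠ 0 := by
  unfold expLine
  rcases (mem_frontier_Icc_reProdIm_Icc hrs zero_le_one).1 hz with
    ⟨-, him | him⟩ | ⟨hre | hre, -⟩
  · rw [him, zero_smul, add_zero]
    exact notMem_expCoamoeba.1 hx _
  · rw [him, one_smul]
    exact notMem_expCoamoeba.1 hy _
  · rw [hre]
    exact hr _
  · rw [hre]
    exact hs _

theorem add_smul_notMem_expCoamoeba [ContinuousAdd E] [ContinuousSMul ℝ E] {S : Set E}
    (hS : IsPreconnected S) (hSsub : S ⊆ (expCoamoeba A a l)ᶜ)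
    (hd : Set.InjOn (fun α => l α d) A) {x : E} (hx : x ∈ S) (hy : x + d ∈ S) {t : ℝ}
    (ht : t ∈ Set.Icc 0 1) : x + t • d ∉ expCoamoeba A a l := by
  refine notMem_expCoamoeba.2 fun u => ?_
  have hA : ∃ α ∈ A, a α ≠ 0 := by
    obtain ⟨α, hα, hne⟩ := Finset.exists_ne_zero_of_sum_ne_zero
      (notMem_expCoamoeba.1 (hSsub hx) u)
    exact ⟨α, hα, left_ne_zero_of_mul hne⟩
  have hdneg : Set.InjOn (fun α => l α (-d)) A := by simpa [Set.InjOn] using hd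
  obtain ⟨R, ⟨L₂, hL₂, hexp₂⟩, ⟨L₁, hL₁, hexp₁⟩, hR⟩ :=
    ((eventually_exists_continuous_log hA hd u).and
      ((eventually_exists_continuous_log hA hdneg u).and
        (Filter.eventually_ge_atTop (0 : ℝ)))).exists
  simp only [smul_neg, ← neg_smul] at hexp₁
  have hfrontier (z : ℂ) (hz : z ∈ frontier (Set.Icc (-R) R ×ℂ Set.Icc 0 1)) :
      expLine A a l d u x z ≠ 0 :=
    expLine_ne_zero_of_mem_frontier (neg_le_self hR) (fun p => hexp₁ p ▸ exp_ne_zero _)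
      (fun p => hexp₂ p ▸ exp_ne_zero _) (hSsub hx) (hSsub hy) hz
  have hmem : (t * I : ℂ) ∈ Set.Icc (-R) R ×ℂ Set.Icc 0 1 := by simpa [mem_reProdIm, hR] using ht
  have hzero := ne_zero_of_rectBoundaryIntegral_logDeriv_eq_zero
    (fun z _ => differentiable_expLine.analyticAt z) hfrontier
    (rectBoundaryIntegral_logDeriv_expLine_eq_zero hS hSsub hL₁ hexp₁ hL₂ hexp₂ hx hy) hmem
  simpa [expLine] using hzero

theorem segment_subset_compl_expCoamoeba [ContinuousAdd E] [ContinuousSMul ℝ E] {S : Set E}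
    (hS : IsPreconnected S) (hSsub : S ⊆ (expCoamoeba A a l)ᶜ) {x y : E} (hx : x ∈ S) (hy : y ∈ S)
    (hd : Set.InjOn (fun α => l α (y - x)) A) : segment ℝ x y ⊆ (expCoamoeba A a l)ᶜ := by
  rw [segment_eq_image']
  rintro _ ⟨t, ht, rfl⟩
  exact add_smul_notMem_expCoamoeba hS hSsub hd hx (by rwa [add_sub_cancel]) ht

end ExpSum

/-! ### Convexity of the components -/

section Convexity

variable {ι E : Type*} [AddCommGroup E] [Module ℝ E] [TopologicalSpace E]
  [IsTopologicalAddGroup E] [ContinuousSMul ℝ E]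

theorem convex_interior_of_dense_directions {C D : Set E} (hD : Dense D)
    (hseg : ∀ p ∈ C, ∀ q ∈ C, q - p ∈ D → segment ℝ p q ⊆ C) : Convex ℝ (interior C) := by
  rw [convex_iff_pointwise_add_subset]
  intro s t hs ht hst
  rcases hs.eq_or_lt with rfl | hs
  · obtain rfl : t = 1 := by linarith
    rintro _ ⟨_, ⟨p, -, rfl⟩, _, ⟨q, hq, rfl⟩, rfl⟩
    simpa using hq
  refine interior_maximal ?_ (isOpen_interior.smul₀ hs.ne').add_right
  rintro _ ⟨_, ⟨p, hp, rfl⟩, _, ⟨q, hq, rfl⟩, rfl⟩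
  -- Move `p` and `q` so that `q - p` becomes `e ∈ D`, keeping the point `s • p + t • q` fixed.
  have hopen : IsOpen {e : E | p + t • (q - p - e) ∈ interior C ∧
      q - s • (q - p - e) ∈ interior C} :=
    (isOpen_interior.preimage (by fun_prop)).inter (isOpen_interior.preimage (by fun_prop))
  obtain ⟨e, ⟨hp', hq'⟩, he⟩ := hD.inter_open_nonempty _ hopen ⟨q - p, by simpa using ⟨hp, hq⟩⟩
  have hdir : q - s • (q - p - e) - (p + t • (q - p - e)) = e := by
    rw [eq_sub_of_add_eq hst]
    module
  refine hseg _ (interior_subset hp') _ (interior_subset hq') (hdir.symm ▸ he)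
    ⟨s, t, hs.le, ht, hst, ?_⟩
  module

theorem dense_setOf_injOn_apply {A : Set ι} (hA : A.Finite) {l : ι → E →L[ℝ] ℝ}
    (hl : Set.InjOn l A) : Dense {d | Set.InjOn (fun α => l α d) A} := by
  have hopen (q : ι × ι) : IsOpen {d | l q.1 d ≠ l q.2 d} :=
    isOpen_ne_fun (l q.1).continuous (l q.2).continuous
  have hdense (q : ι × ι) (hq : q ∈ A.offDiag) : Dense {d | l q.1 d ≠ l q.2 d} := by
    have hne : l q.1 - l q.2 ≠ 0 := sub_ne_zero.2 fun h => hq.2.2 (hl hq.1 hq.2.1 h)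
    have := (dense_compl_singleton (0 : ℝ)).preimage
      (ContinuousLinearMap.isOpenMap_of_ne_zero _ hne)
    simpa [Set.preimage, sub_eq_zero] using this
  have hinter : Dense (⋂ q ∈ A.offDiag, {d | l q.1 d ≠ l q.2 d}) := by
    rw [← Set.sInter_image]
    exact (hA.offDiag.image _).dense_sInter (Set.forall_mem_image.2 fun q _ => hopen q)
      (Set.forall_mem_image.2 hdense)
  refine hinter.mono fun d hd α hα β hβ heq => ?_
  by_contra hne
  exact Set.mem_iInter₂.1 hd (α, β) ⟨hα, hβ, hne⟩ heq

theorem coamoeba_complement_component_interior_convex_general (A : Finset ι) (a : ι → ℂ)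
    (l : ι → E →L[ℝ] ℝ) (hl : Set.InjOn l A) (x : E) :
    Convex ℝ (interior (connectedComponentIn (expCoamoeba A a l)ᶜ x)) := by
  refine convex_interior_of_dense_directions (dense_setOf_injOn_apply A.finite_toSet hl)
    fun p hp q hq hpq => ?_
  have hseg : segment ℝ p q ⊆ (expCoamoeba A a l)ᶜ :=
    segment_subset_compl_expCoamoeba isPreconnected_connectedComponentIn
      (connectedComponentIn_subset _ _) hp hq hpq
  rw [connectedComponentIn_eq hp]
  exact (convex_segment p q).isPreconnected.subset_connectedComponentIn
    (left_mem_segment ℝ p q) hseg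

end Convexity

/-! ### Laurent polynomials -/

section LaurentPolynomial

variable {n : ℕ}

/-- The exponent `α ∈ ℤⁿ` of a Laurent monomial as the linear form `p ↦ ⟨α, p⟩` on `ℝⁿ`. -/
noncomputable def exponentForm (α : Fin n → ℤ) : (Fin n → ℝ) →L[ℝ] ℝ :=
  ∑ j, (α j : ℝ) • ContinuousLinearMap.proj j

theorem exponentForm_apply (α : Fin n → ℤ) (p : Fin n → ℝ) :
    exponentForm α p = ∑ j, (α j : ℝ) * p j := by
  simp [exponentForm]

theorem exponentForm_injective : Function.Injective (exponentForm (n := n)) := by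
  intro α β h
  funext j
  simpa [exponentForm_apply, Pi.single_apply] using DFunLike.congr_fun h (Pi.single j 1)

theorem prod_exp_zpow (α : Fin n → ℤ) (u p : Fin n → ℝ) :
    ∏ j, cexp (u j + p j * I) ^ α j = cexp (exponentForm α u + exponentForm α p * I) := by
  simp only [← exp_int_mul, ← exp_sum, exponentForm_apply]
  push_cast
  rw [Finset.sum_mul, ← Finset.sum_add_distrib]
  exact congrArg cexp (Finset.sum_congr rfl fun j _ => by ring)

theorem exists_eq_arg_add_iff_exp_log_norm_eq {z : ℂ} (hz : z ≠ 0) (t : ℝ) :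
    (∃ k : ℤ, t = z.arg + 2 * Real.pi * k) ↔ cexp (Real.log ‖z‖ + t * I) = z := by
  have hexp : cexp (Real.log ‖z‖ + t * I) = z ↔
      cexp (Real.log ‖z‖ + t * I) = cexp (Real.log ‖z‖ + z.arg * I) :=
    Eq.congr_right (exp_log hz).symm
  rw [hexp, exp_eq_exp_iff_exists_int]
  refine exists_congr fun k => ⟨fun h => ?_, fun h => ?_⟩
  · rw [h]
    push_cast
    ring
  · simpa [mul_comm, mul_left_comm] using congrArg im h

theorem setOf_arg_zeros_eq_expCoamoeba (A : Finset (Fin n → ℤ)) (a : (Fin n → ℤ) → ℂ) :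
    {x : Fin n → ℝ | ∃ z : Fin n → ℂ,
      (∀ j, z j ≠ 0) ∧ (∑ α ∈ A, a α * ∏ j, z j ^ (α j)) = 0 ∧
      ∀ j, ∃ k : ℤ, x j = (z j).arg + 2 * Real.pi * k} = expCoamoeba A a exponentForm := by
  ext x
  constructor
  · rintro ⟨z, hz, hzero, hx⟩
    refine ⟨fun j => Real.log ‖z j‖, ?_⟩
    have hexp (j : Fin n) : cexp (Real.log ‖z j‖ + x j * I) = z j :=
      (exists_eq_arg_add_iff_exp_log_norm_eq (hz j) _).1 (hx j)
    simpa only [expSum, ← prod_exp_zpow, hexp] using hzero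
  · rintro ⟨u, hu⟩
    refine ⟨fun j => cexp (u j + x j * I), fun j => exp_ne_zero _, ?_, fun j => ?_⟩
    · simpa only [expSum, ← prod_exp_zpow] using hu
    · refine (exists_eq_arg_add_iff_exp_log_norm_eq (exp_ne_zero _) _).2 ?_
      simp [norm_exp]

end LaurentPolynomial

/-- **Theorem 5.19(a).** For a Laurent polynomial `f` in `n` variables with finite
nonempty support `A ⊆ ℤⁿ` and nonzero coefficients, the interior of every connected
component of the complement in `ℝⁿ` of the lifted coamoeba of `V_f` is convex. -/
theorem coamoeba_complement_component_interior_convex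
    (n : ℕ) (A : Finset (Fin n → ℤ)) (hA : A.Nonempty)
    (a : (Fin n → ℤ) → ℂ) (ha : ∀ α ∈ A, a α ≠ 0)
    (coAmoeba : Set (Fin n → ℝ))
    (hcoAmoeba : coAmoeba = {x : Fin n → ℝ | ∃ z : Fin n → ℂ,
      (∀ j, z j ≠ 0) ∧ (∑ α ∈ A, a α * ∏ j, z j ^ (α j)) = 0 ∧
      ∀ j, ∃ k : ℤ, x j = (z j).arg + 2 * Real.pi * k})
    (x : Fin n → ℝ) (hx : x ∈ coAmoebaᶜ) :
    Convex ℝ (interior (connectedComponentIn coAmoebaᶜ x)) := by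
  rw [hcoAmoeba, setOf_arg_zeros_eq_expCoamoeba]
  exact coamoeba_complement_component_interior_convex_general A a exponentForm
    exponentForm_injective.injOn x
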